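/- arXiv:1304.6655 — 5 statements merged into one kernel-verified Lean document; each statement's English description precedes it below -/
import Mathlib

section
/- Fix p ∈ (0,1) and x ∈ ℝⁿ. Then lim_{ε→0⁺} ( n − F_ε(x)/log ε ) = ‖x‖₀, where F_ε(x) = Σᵢ [ log(|xᵢ|+ε) + (|xᵢ|+ε)^p ]. -/
open Filter in
theorem merit_aux (p : ℝ) (hp : p ∈ Set.Ioo (0 : ℝ) 1) (a : ℝ) :
    Tendsto (fun ε : ℝ => 1 - (Real.log (|a| + ε) + (|a| + ε) ^ p) / Real.log ε)
      (nhdsWithin 0 (Set.Ioi 0)) (nhds (if a ≠ 0 then 1 else 0)) := by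
  have hlog : Tendsto Real.log (nhdsWithin 0 (Set.Ioi 0)) atBot :=
    Real.tendsto_log_nhdsGT_zero
  have hadd : Tendsto (fun ε : ℝ => |a| + ε) (nhdsWithin 0 (Set.Ioi 0)) (nhds |a|) := by
    have : Tendsto (fun ε : ℝ => |a| + ε) (nhds 0) (nhds (|a| + 0)) :=
      tendsto_const_nhds.add tendsto_id
    rw [add_zero] at this
    exact this.mono_left nhdsWithin_le_nhds
  have hpow : Tendsto (fun ε : ℝ => (|a| + ε) ^ p / Real.log ε)
      (nhdsWithin 0 (Set.Ioi 0)) (nhds 0) :=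
    (hadd.rpow_const (Or.inr hp.1.le)).div_atBot hlog
  by_cases ha : a = 0
  · subst ha
    have h1 : Tendsto (fun ε : ℝ => Real.log (|(0:ℝ)| + ε) / Real.log ε)
        (nhdsWithin 0 (Set.Ioi 0)) (nhds 1) := by
      refine tendsto_const_nhds.congr' ?_
      filter_upwards [hlog.eventually_lt_atBot 0] with ε hε
      simp [div_self hε.ne]
    have := (h1.add hpow).const_sub 1
    simp only [add_div]
    simpa using this
  · have h1 := (hadd.log (abs_ne_zero.mpr ha)).div_atBot hlog
    have := (h1.add hpow).const_sub 1
    simp only [add_div]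
    simpa [ha] using this


/-- For fixed `p ∈ (0,1)` and `x ∈ ℝⁿ`,
`n − F_ε(x) / log ε → ‖x‖₀` as `ε → 0⁺`, where
`F_ε(x) = ∑ i, (log (|x i| + ε) + (|x i| + ε) ^ p)`. -/
theorem merit_log_rpow_tendsto_l0norm (n : ℕ) (p : ℝ) (hp : p ∈ Set.Ioo (0 : ℝ) 1)
    (x : Fin n → ℝ) :
    Filter.Tendsto
      (fun ε : ℝ =>
        (n : ℝ) -
          (∑ i, (Real.log (|x i| + ε) + (|x i| + ε) ^ p)) / Real.log ε)
      (nhdsWithin 0 (Set.Ioi 0))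
      (nhds ((Finset.univ.filter (fun i => x i ≠ 0)).card : ℝ)) := by
  have h := tendsto_finsetSum (Finset.univ : Finset (Fin n))
    (fun i _ => merit_aux p hp (x i))
  simp only [Finset.sum_sub_distrib, ← Finset.sum_div, Finset.sum_boole] at h
  simpa using h
end

section
/- Fix p ∈ (0,1) and x ∈ ℝⁿ such that |xᵢ| + |xᵢ|^p ≠ 1 for every index i with xᵢ ≠ 0. Then lim_{ε→0⁺} Σᵢ log(|log(|xᵢ| + ε + (|xᵢ|+ε)^p)|) / log(−log ε) = n − ‖x‖₀. -/
open Filter Topology in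
lemma aux_den : Tendsto (fun ε : ℝ => Real.log (-Real.log ε)) (𝓝[>] 0) atTop :=
  Real.tendsto_log_atTop.comp (tendsto_neg_atBot_atTop.comp Real.tendsto_log_nhdsGT_zero)

open Filter Topology in
lemma aux_zero (p : ℝ) (hp : p ∈ Set.Ioo (0 : ℝ) 1) :
    Tendsto (fun ε : ℝ => Real.log |Real.log (ε + ε ^ p)| / Real.log (-Real.log ε))
      (𝓝[>] 0) (𝓝 1) := by
  obtain ⟨h0, h1⟩ := hp
  have hpow : Tendsto (fun ε : ℝ => ε ^ (1 - p)) (𝓝[>] 0) (𝓝 0) := by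
    have h := (Real.continuousAt_rpow_const (0 : ℝ) (1 - p) (Or.inr (by linarith))).tendsto
    rw [Real.zero_rpow (by linarith)] at h
    exact h.mono_left nhdsWithin_le_nhds
  have hlog : Tendsto (fun ε : ℝ => Real.log (1 + ε ^ (1 - p))) (𝓝[>] 0) (𝓝 0) := by
    have h := (hpow.const_add 1).log (by norm_num)
    simpa using h
  have hr : Tendsto (fun ε : ℝ => p + Real.log (1 + ε ^ (1 - p)) / Real.log ε)
      (𝓝[>] 0) (𝓝 p) := by
    have h := (hlog.div_atBot Real.tendsto_log_nhdsGT_zero).const_add p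
    simpa using h
  have hq := ((hr.log h0.ne').div_atTop aux_den).const_add 1
  rw [add_zero] at hq
  refine hq.congr' ?_
  filter_upwards [aux_den.eventually_gt_atTop 0, hr.eventually (lt_mem_nhds h0),
    Real.tendsto_log_nhdsGT_zero.eventually_lt_atBot 0, self_mem_nhdsWithin] with ε hd hpos hl hε
  have hε : 0 < ε := hε
  have e1 : ε + ε ^ p = ε ^ p * (1 + ε ^ (1 - p)) := by
    rw [mul_add, ← Real.rpow_add hε]
    simp [add_comm]
  have h2 : 0 < 1 + ε ^ (1 - p) := by positivity
  have e2 : Real.log (ε + ε ^ p) =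
      -((-Real.log ε) * (p + Real.log (1 + ε ^ (1 - p)) / Real.log ε)) := by
    rw [e1, Real.log_mul (by positivity) h2.ne', Real.log_rpow hε]
    have := hl.ne
    field_simp
  rw [e2, abs_neg, Real.log_abs, Real.log_mul (by linarith) hpos.ne', add_div,
    div_self hd.ne']

open Filter Topology in
lemma aux_ne (p a : ℝ) (ha : 0 < a) (h : a + a ^ p ≠ 1) :
    Tendsto (fun ε : ℝ => Real.log |Real.log (a + ε + (a + ε) ^ p)| / Real.log (-Real.log ε))
      (𝓝[>] 0) (𝓝 0) := by
  have t1 : Tendsto (fun ε : ℝ => a + ε) (𝓝[>] 0) (𝓝 a) := by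
    have : Tendsto (fun ε : ℝ => a + ε) (𝓝 0) (𝓝 (a + 0)) := tendsto_id.const_add a
    rw [add_zero] at this
    exact this.mono_left nhdsWithin_le_nhds
  have t2 := t1.add (t1.rpow_const (p := p) (Or.inl ha.ne'))
  have hp : 0 < a + a ^ p := by positivity
  have hl : Real.log (a + a ^ p) ≠ 0 := Real.log_ne_zero_of_pos_of_ne_one hp h
  exact ((t2.log hp.ne').abs.log (abs_ne_zero.mpr hl)).div_atTop aux_den

/-- For fixed `p ∈ (0,1)` and `x ∈ ℝⁿ` with `|x i| + |x i|^p ≠ 1` whenever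
`x i ≠ 0`, the loglog merit function satisfies
`(∑ i, log |log (|x i| + ε + (|x i| + ε)^p)|) / log (-log ε) → n − ‖x‖₀`
as `ε → 0⁺`. -/
theorem loglog_merit_tendsto (n : ℕ) (p : ℝ) (hp : p ∈ Set.Ioo (0 : ℝ) 1)
    (x : Fin n → ℝ) (hx : ∀ i, x i ≠ 0 → |x i| + |x i| ^ p ≠ 1) :
    Filter.Tendsto
      (fun ε : ℝ =>
        (∑ i, Real.log |Real.log (|x i| + ε + (|x i| + ε) ^ p)|) /
          Real.log (-Real.log ε))
      (nhdsWithin 0 (Set.Ioi 0))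
      (nhds ((n : ℝ) - (Finset.univ.filter (fun i => x i ≠ 0)).card)) := by

  have hs : (n : ℝ) - (Finset.univ.filter (fun i => x i ≠ 0)).card
      = ∑ i : Fin n, (if x i ≠ 0 then (0 : ℝ) else 1) := by
    have h : ∑ i : Fin n, (if x i ≠ 0 then (0 : ℝ) else 1)
        = ∑ i : Fin n, (1 - if x i ≠ 0 then (1 : ℝ) else 0) :=
      Finset.sum_congr rfl fun i _ => by split_ifs <;> norm_num
    rw [h, Finset.sum_sub_distrib, Finset.sum_boole]
    simp
  rw [hs]
  simp_rw [Finset.sum_div]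
  refine tendsto_finsetSum _ fun i _ => ?_
  by_cases h : x i = 0
  · simpa [h] using aux_zero p hp
  · rw [if_pos h]
    exact aux_ne p _ (abs_pos.mpr h) (hx i h)
end

section
/- Fix ε > 0 and p ∈ (0,1). The function g(t) = log(log(t + ε + (t+ε)^p)) is strictly concave on the convex set {t ∈ ℝ : t ≥ 0 and t + ε + (t+ε)^p > 1}. -/
/-- For fixed `ε > 0` and `p ∈ (0,1)`, the function
`t ↦ log (log (t + ε + (t+ε)^p))` is strictly concave on the convex set
`{t : 0 ≤ t ∧ t + ε + (t+ε)^p > 1}`. -/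
theorem strictConcaveOn_loglog (ε p : ℝ) (hε : 0 < ε)
    (hp : p ∈ Set.Ioo (0 : ℝ) 1) :
    StrictConcaveOn ℝ {t : ℝ | 0 ≤ t ∧ 1 < t + ε + (t + ε) ^ p}
      (fun t : ℝ => Real.log (Real.log (t + ε + (t + ε) ^ p))) := by
  have key : ∀ x y a b : ℝ, 0 ≤ x → 0 ≤ y → 0 ≤ a → 0 ≤ b → a + b = 1 →
      a * (x + ε + (x + ε) ^ p) + b * (y + ε + (y + ε) ^ p) ≤
        (a * x + b * y) + ε + ((a * x + b * y) + ε) ^ p := by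
    intro x y a b hx hy ha hb hab
    have h := (Real.strictConcaveOn_rpow hp.1 hp.2).concaveOn.2
      (show x + ε ∈ Set.Ici (0:ℝ) from by simp only [Set.mem_Ici]; linarith)
      (show y + ε ∈ Set.Ici (0:ℝ) from by simp only [Set.mem_Ici]; linarith) ha hb hab
    simp only [smul_eq_mul] at h
    have e : a * (x + ε) + b * (y + ε) = a * x + b * y + ε := by
      linear_combination ε * hab
    rw [e] at h
    linarith
  have keys : ∀ x y a b : ℝ, 0 ≤ x → 0 ≤ y → x ≠ y → 0 < a → 0 < b → a + b = 1 →
      a * (x + ε + (x + ε) ^ p) + b * (y + ε + (y + ε) ^ p) <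
        (a * x + b * y) + ε + ((a * x + b * y) + ε) ^ p := by
    intro x y a b hx hy hxy ha hb hab
    have h := (Real.strictConcaveOn_rpow hp.1 hp.2).2
      (show x + ε ∈ Set.Ici (0:ℝ) from by simp only [Set.mem_Ici]; linarith)
      (show y + ε ∈ Set.Ici (0:ℝ) from by simp only [Set.mem_Ici]; linarith)
      (fun h => hxy (by linarith)) ha hb hab
    simp only [smul_eq_mul] at h
    have e : a * (x + ε) + b * (y + ε) = a * x + b * y + ε := by
      linear_combination ε * hab
    rw [e] at h
    linarith
  have one : ∀ u v a b : ℝ, 1 < u → 1 < v → 0 ≤ a → 0 ≤ b → a + b = 1 →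
      1 < a * u + b * v := by
    intro u v a b hu hv ha hb hab
    have := (convex_Ioi (1:ℝ)) hu hv ha hb hab
    simpa using this
  have logc : ∀ u v a b : ℝ, 0 < u → 0 < v → 0 ≤ a → 0 ≤ b → a + b = 1 →
      a * Real.log u + b * Real.log v ≤ Real.log (a * u + b * v) := by
    intro u v a b hu hv ha hb hab
    simpa using strictConcaveOn_log_Ioi.concaveOn.2 hu hv ha hb hab
  refine ⟨?_, ?_⟩
  · rintro x ⟨hx, hx1⟩ y ⟨hy, hy1⟩ a b ha hb hab
    simp only [smul_eq_mul, Set.mem_setOf_eq]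
    exact ⟨by positivity, (one _ _ a b hx1 hy1 ha hb hab).trans_le (key x y a b hx hy ha hb hab)⟩
  · rintro x ⟨hx, hx1⟩ y ⟨hy, hy1⟩ hxy a b ha hb hab
    simp only [smul_eq_mul]
    have k := keys x y a b hx hy hxy ha hb hab
    have o := one _ _ a b hx1 hy1 ha.le hb.le hab
    have lx := Real.log_pos hx1
    have ly := Real.log_pos hy1
    have l1 := logc (x + ε + (x + ε) ^ p) (y + ε + (y + ε) ^ p) a b (by linarith) (by linarith)
      ha.le hb.le hab
    have l2 := Real.log_lt_log (by linarith) k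
    have l3 := logc _ _ a b lx ly ha.le hb.le hab
    exact l3.trans_lt (Real.log_lt_log (by positivity) (l1.trans_lt l2))
end

section
/- Fix p, q ∈ (0,1) and x ∈ ℝⁿ. Then lim_{ε→0⁺} Σᵢ |log(|xᵢ| + ε + (|xᵢ|+ε)^q)|^p / |log(ε + ε^q)|^p = n − ‖x‖₀. -/
/-- For fixed `p, q ∈ (0,1)` and `x ∈ ℝⁿ`,
`(∑ i, |log (|x i| + ε + (|x i| + ε)^q)|^p) / |log (ε + ε^q)|^p → n − ‖x‖₀`
as `ε → 0⁺`. -/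
theorem logpow_merit_tendsto (n : ℕ) (p q : ℝ) (hp : p ∈ Set.Ioo (0 : ℝ) 1)
    (hq : q ∈ Set.Ioo (0 : ℝ) 1) (x : Fin n → ℝ) :
    Filter.Tendsto
      (fun ε : ℝ =>
        (∑ i, |Real.log (|x i| + ε + (|x i| + ε) ^ q)| ^ p) /
          |Real.log (ε + ε ^ q)| ^ p)
      (nhdsWithin 0 (Set.Ioi 0))
      (nhds ((n : ℝ) - (Finset.univ.filter (fun i => x i ≠ 0)).card)) := by
  obtain ⟨hp0, hp1⟩ := hp
  obtain ⟨hq0, hq1⟩ := hq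
  have hbase : Filter.Tendsto (fun ε : ℝ => ε + ε ^ q) (nhdsWithin 0 (Set.Ioi 0))
      (nhdsWithin 0 (Set.Ioi 0)) := by
    apply tendsto_nhdsWithin_of_tendsto_nhds_of_eventually_within
    · have h : ContinuousAt (fun ε : ℝ => ε + ε ^ q) 0 :=
        continuousAt_id.add (Real.continuousAt_rpow_const 0 q (Or.inr hq0.le))
      have h2 := h.tendsto
      simp only [Real.zero_rpow hq0.ne', add_zero] at h2
      exact h2.mono_left nhdsWithin_le_nhds
    · filter_upwards [self_mem_nhdsWithin] with ε hε
      have h0 : (0 : ℝ) < ε := hε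
      have := Real.rpow_pos_of_pos h0 q
      exact Set.mem_Ioi.mpr (by linarith)
  have hden : Filter.Tendsto (fun ε : ℝ => |Real.log (ε + ε ^ q)| ^ p)
      (nhdsWithin 0 (Set.Ioi 0)) Filter.atTop :=
    (tendsto_rpow_atTop hp0).comp
      (Filter.tendsto_abs_atBot_atTop.comp (Real.tendsto_log_nhdsGT_zero.comp hbase))
  have hterm : ∀ i, Filter.Tendsto
      (fun ε : ℝ => |Real.log (|x i| + ε + (|x i| + ε) ^ q)| ^ p / |Real.log (ε + ε ^ q)| ^ p)
      (nhdsWithin 0 (Set.Ioi 0)) (nhds (1 - if x i ≠ 0 then 1 else 0)) := by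
    intro i
    by_cases hx : x i = 0
    · simp only [hx, abs_zero, zero_add, ne_eq, not_true_eq_false, if_false, sub_zero]
      apply tendsto_const_nhds.congr'
      filter_upwards [hden.eventually_gt_atTop 0] with ε hε
      exact (div_self hε.ne').symm
    · have ha : 0 < |x i| := abs_pos.mpr hx
      have hc : ContinuousAt
          (fun ε : ℝ => |Real.log (|x i| + ε + (|x i| + ε) ^ q)| ^ p) 0 := by
        have h1 : ContinuousAt (fun ε : ℝ => |x i| + ε) 0 := by fun_prop
        have h2 : ContinuousAt (fun ε : ℝ => (|x i| + ε) ^ q) 0 :=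
          h1.rpow_const (Or.inr hq0.le)
        have h3 := Real.rpow_pos_of_pos ha q
        exact (((h1.add h2).log (by simp; positivity)).abs).rpow_const (Or.inr hp0.le)
      simp only [ne_eq, hx, not_false_eq_true, if_true, sub_self]
      exact (hc.tendsto.mono_left nhdsWithin_le_nhds).div_atTop hden
  have hsum := tendsto_finsetSum Finset.univ (fun i _ => hterm i)
  simp only [Finset.sum_div]
  convert hsum using 2
  rw [Finset.sum_sub_distrib, Finset.sum_boole]
  simp
end

section
/- Fix ε > 0 and p, q ∈ (0,1). The function g(t) = (1/p) · (log(t + ε + (t+ε)^q))^p is strictly concave on the convex set {t ∈ ℝ : t ≥ 0 and t + ε + (t+ε)^q > 1}. -/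
/-- For fixed `ε > 0` and `p, q ∈ (0,1)`, the function
`t ↦ (1/p) * (log (t + ε + (t+ε)^q))^p` is strictly concave on the convex set
`{t : 0 ≤ t ∧ t + ε + (t+ε)^q > 1}`. -/
theorem strictConcaveOn_logpow (ε p q : ℝ) (hε : 0 < ε)
    (hp : p ∈ Set.Ioo (0 : ℝ) 1) (hq : q ∈ Set.Ioo (0 : ℝ) 1) :
    StrictConcaveOn ℝ {t : ℝ | 0 ≤ t ∧ 1 < t + ε + (t + ε) ^ q}
      (fun t : ℝ => (1 / p) * Real.log (t + ε + (t + ε) ^ q) ^ p) := by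
  obtain ⟨hp0, hp1⟩ := hp
  obtain ⟨hq0, hq1⟩ := hq
  have key : ∀ x y : ℝ, 0 ≤ x → 0 ≤ y → ∀ a b : ℝ, 0 ≤ a → 0 ≤ b → a + b = 1 →
      a * (x + ε + (x + ε) ^ q) + b * (y + ε + (y + ε) ^ q)
        ≤ (a * x + b * y) + ε + ((a * x + b * y) + ε) ^ q := by
    intro x y hx hy a b ha hb hab
    have h := (Real.concaveOn_rpow hq0.le hq1.le).2
      (show x + ε ∈ Set.Ici (0 : ℝ) from by simp only [Set.mem_Ici]; linarith)
      (show y + ε ∈ Set.Ici (0 : ℝ) from by simp only [Set.mem_Ici]; linarith) ha hb hab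
    simp only [smul_eq_mul] at h
    have e : a * (x + ε) + b * (y + ε) = (a * x + b * y) + ε := by
      linear_combination ε * hab
    rw [e] at h
    linarith
  refine ⟨?_, ?_⟩
  · rintro x ⟨hx, hx1⟩ y ⟨hy, hy1⟩ a b ha hb hab
    simp only [smul_eq_mul, Set.mem_setOf_eq]
    refine ⟨by positivity, lt_of_lt_of_le ?_ (key x y hx hy a b ha hb hab)⟩
    rcases ha.eq_or_lt with rfl | ha'
    · have : b = 1 := by linarith
      subst this; linarith
    · have h1 := mul_lt_mul_of_pos_left hx1 ha'
      have h2 := mul_le_mul_of_nonneg_left hy1.le hb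
      linarith
  · rintro x ⟨hx, hx1⟩ y ⟨hy, hy1⟩ hxy a b ha hb hab
    simp only [smul_eq_mul]
    have hk := key x y hx hy a b ha.le hb.le hab
    have hne : x + ε + (x + ε) ^ q ≠ y + ε + (y + ε) ^ q := by
      rcases lt_or_gt_of_ne hxy with h | h
      · have := Real.rpow_lt_rpow (by linarith) (show x + ε < y + ε by linarith) hq0
        exact ne_of_lt (by linarith)
      · have := Real.rpow_lt_rpow (by linarith) (show y + ε < x + ε by linarith) hq0
        exact ne_of_gt (by linarith)
    generalize x + ε + (x + ε) ^ q = X at *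
    generalize y + ε + (y + ε) ^ q = Y at *
    generalize (a * x + b * y) + ε + ((a * x + b * y) + ε) ^ q = Z at *
    have hl := strictConcaveOn_log_Ioi.2 (show X ∈ Set.Ioi (0 : ℝ) from by
      simp only [Set.mem_Ioi]; linarith) (show Y ∈ Set.Ioi (0 : ℝ) from by
      simp only [Set.mem_Ioi]; linarith) hne ha hb hab
    simp only [smul_eq_mul] at hl
    have hX := Real.log_pos hx1
    have hY := Real.log_pos hy1
    have hZ : Real.log (a * X + b * Y) ≤ Real.log Z :=
      Real.log_le_log (by nlinarith) hk
    have hr := (Real.concaveOn_rpow hp0.le hp1.le).2 (show Real.log X ∈ Set.Ici (0 : ℝ) from hX.le)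
      (show Real.log Y ∈ Set.Ici (0 : ℝ) from hY.le) ha.le hb.le hab
    simp only [smul_eq_mul] at hr
    have hm := Real.rpow_lt_rpow (by positivity) (lt_of_lt_of_le hl hZ) hp0
    have := mul_lt_mul_of_pos_left (lt_of_le_of_lt hr hm) (show 0 < 1 / p by positivity)
    linarith
end
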